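/- Let Z : ℝ^N → ℝ be C², Z be stationary with finite expected number of critical points, A invertible, and X(t) = Z(At). Then E[μ_i^X(D,u)] = |det A| · E[μ_i^Z(D,u)] for every measurable bounded D ⊆ ℝ^N, where μ_i^g(D,u) counts critical points of index i of g in D with value ≥ u. -/

import Mathlib

open MeasureTheory Matrix

/-- The index of a real-valued form `Q` on `Fin N → ℝ`. -/
noncomputable def negIdx {N : ℕ} (Q : (Fin N → ℝ) → ℝ) : ℕ :=
  sSup {d : ℕ | ∃ V : Submodule ℝ (Fin N → ℝ),
    Module.finrank ℝ V = d ∧ ∀ x ∈ V, x ≠ 0 → Q x < 0}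

/-- The set of critical points of index `i` with value `≥ u` of `F` inside `D`. -/
def critSet {N : ℕ} (F : (Fin N → ℝ) → ℝ) (D : Set (Fin N → ℝ)) (u : ℝ) (i : ℕ) :
    Set (Fin N → ℝ) :=
  {t | t ∈ D ∧ F t ≥ u ∧ fderiv ℝ F t = 0 ∧
    negIdx (fun v => iteratedFDeriv ℝ 2 F t ![v, v]) = i}

/-- Two measures which agree on compact sets are equal, if one is finite on compact sets. -/
theorem measure_ext_of_isCompact {E : Type*} [MetricSpace E] [ProperSpace E]
    [MeasurableSpace E] [BorelSpace E] (μ ν : Measure E) [IsFiniteMeasureOnCompacts μ]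
    (h : ∀ K, IsCompact K → μ K = ν K) : μ = ν := by
  rcases isEmpty_or_nonempty E with hE | ⟨⟨x⟩⟩
  · exact Subsingleton.elim _ _
  have hU : ⋃ n : ℕ, Metric.closedBall x (n : ℝ) = Set.univ := Metric.iUnion_closedBall_nat x
  refine Measure.ext_of_iUnion_eq_univ hU fun n => ?_
  have hK := isCompact_closedBall x (n : ℝ)
  have : IsFiniteMeasure (μ.restrict (Metric.closedBall x (n : ℝ))) :=
    ⟨by simpa using hK.measure_lt_top⟩
  refine ext_of_generate_finite _ ?_ isPiSystem_isClosed (fun F hF => ?_) ?_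
  · rw [BorelSpace.measurable_eq (α := E), borel_eq_generateFrom_isClosed]
  · have hF : IsClosed F := hF
    rw [Measure.restrict_apply hF.measurableSet, Measure.restrict_apply hF.measurableSet]
    exact h _ (hK.inter_left hF)
  · simpa using h _ hK

/-- The counting measure of the points of a set `B`, viewed as a measure on the ambient space. -/
noncomputable def pointMeasure {E : Type*} [MeasurableSpace E] (B : Set E) : Measure E :=
  Measure.sum fun b : B => Measure.dirac (b : E)

theorem pointMeasure_apply {E : Type*} [MeasurableSpace E] (B : Set E) {D : Set E}
    (hD : MeasurableSet D) : pointMeasure B D = ((D ∩ B).encard : ENNReal) := by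
  rw [pointMeasure, Measure.sum_apply _ hD, ← ENNReal.tsum_set_one,
    tsum_congr fun b : B => Measure.dirac_apply' (b : E) hD,
    tsum_subtype B (fun b => D.indicator (1 : E → ENNReal) b),
    tsum_subtype (D ∩ B) (fun _ => (1 : ENNReal))]
  congr 1
  ext x
  by_cases h1 : x ∈ B <;> by_cases h2 : x ∈ D <;> simp [h1, h2]

/-- A random measure whose values on compact sets are almost everywhere measurable and
almost surely finite has almost everywhere measurable values on all measurable sets. -/
theorem aemeasurable_apply_of_isCompact {E : Type*} [MetricSpace E] [ProperSpace E]
    [MeasurableSpace E] [BorelSpace E] {Ω : Type*} [MeasurableSpace Ω] {P : Measure Ω}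
    (ν : Ω → Measure E) (hν : ∀ K, IsCompact K → AEMeasurable (fun ω => ν ω K) P)
    (hfin : ∀ K, IsCompact K → ∀ᵐ ω ∂P, ν ω K ≠ ⊤) {D : Set E} (hD : MeasurableSet D) :
    AEMeasurable (fun ω => ν ω D) P := by
  rcases isEmpty_or_nonempty E with hE | ⟨⟨x⟩⟩
  · rw [Set.eq_empty_of_isEmpty D]; simp
  have key : ∀ n : ℕ, AEMeasurable (fun ω => ν ω (D ∩ Metric.closedBall x n)) P := by
    intro n
    have hK := isCompact_closedBall x (n : ℝ)
    have hKm : MeasurableSet (Metric.closedBall x (n : ℝ)) := hK.measurableSet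
    refine MeasurableSpace.induction_on_inter
      (C := fun D _ => AEMeasurable (fun ω => ν ω (D ∩ Metric.closedBall x n)) P)
      ((BorelSpace.measurable_eq (α := E)).trans borel_eq_generateFrom_isClosed)
      isPiSystem_isClosed ?_ ?_ ?_ ?_ D hD
    · simp
    · intro F hF
      exact hν _ (hK.inter_left hF)
    · intro F hF ih
      refine ((hν _ hK).sub ih).congr ?_
      filter_upwards [hfin _ hK] with ω hω
      rw [Pi.sub_apply, ← measure_sdiff Set.inter_subset_right (hF.inter hKm).nullMeasurableSet
        (measure_ne_top_of_subset Set.inter_subset_right hω)]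
      congr 1
      ext y
      simp only [Set.mem_sdiff, Set.mem_inter_iff, Set.mem_compl_iff]
      tauto
    · intro f hd hf ih
      have hs : AEMeasurable
          (fun ω => ∑' i, ν ω (f i ∩ Metric.closedBall x n)) P := AEMeasurable.tsum ih
      refine hs.congr (ae_of_all _ fun ω => ?_)
      simp only
      rw [Set.iUnion_inter, measure_iUnion]
      · exact fun i j hij => (hd hij).mono Set.inter_subset_left Set.inter_subset_left
      · exact fun i => (hf i).inter hKm
  refine (AEMeasurable.iSup key).congr (ae_of_all _ fun ω => ?_)
  have hmono : Monotone fun n : ℕ => D ∩ Metric.closedBall x n := fun m n hmn =>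
    Set.inter_subset_inter_right _ (Metric.closedBall_subset_closedBall (by exact_mod_cast hmn))
  simp only
  rw [← hmono.measure_iUnion, ← Set.inter_iUnion, Metric.iUnion_closedBall_nat, Set.inter_univ]

/-- A stationary random measure with finite intensity has intensity proportional to
Lebesgue measure. -/
theorem exists_lintegral_eq_mul_volume {N : ℕ} {Ω : Type*} [MeasurableSpace Ω] {P : Measure Ω}
    (ν : Ω → Measure (Fin N → ℝ)) (hν : ∀ K, IsCompact K → AEMeasurable (fun ω => ν ω K) P)
    (hstat : ∀ K, IsCompact K → ∀ s : Fin N → ℝ,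
      ∫⁻ ω, ν ω ((fun t => s + t) ⁻¹' K) ∂P = ∫⁻ ω, ν ω K ∂P)
    (hfin : ∫⁻ ω, ν ω (Set.Icc 0 1) ∂P ≠ ⊤) :
    ∃ c : ENNReal, ∀ D, MeasurableSet D → ∫⁻ ω, ν ω D ∂P = c * volume D := by
  have hpre : ∀ K, IsCompact K → ∀ s : Fin N → ℝ, IsCompact ((fun t => s + t) ⁻¹' K) :=
    fun K hK s => (Homeomorph.addLeft s).isClosedEmbedding.isCompact_preimage hK
  have hlt : ∀ K : Set (Fin N → ℝ), IsCompact K → ∫⁻ ω, ν ω K ∂P < ⊤ := by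
    intro K hK
    have hint : (interior (Set.Icc (0 : Fin N → ℝ) 1)).Nonempty := by
      rw [← Set.pi_univ_Icc, interior_pi_set Set.finite_univ]
      exact ⟨fun _ => 1 / 2, fun i _ => by simp; norm_num⟩
    obtain ⟨F, hF⟩ := compact_covered_by_add_left_translates hK hint
    calc ∫⁻ ω, ν ω K ∂P
        ≤ ∫⁻ ω, ∑ g ∈ F, ν ω ((fun t => g + t) ⁻¹' Set.Icc 0 1) ∂P :=
          lintegral_mono fun ω => (measure_mono hF).trans (measure_biUnion_finset_le _ _)
      _ = ∑ g ∈ F, ∫⁻ ω, ν ω ((fun t => g + t) ⁻¹' Set.Icc 0 1) ∂P :=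
          lintegral_finsetSum' _ fun g _ => hν _ (hpre _ isCompact_Icc g)
      _ < ⊤ := ENNReal.sum_lt_top.2 fun g _ => by
          rw [hstat _ isCompact_Icc]
          exact hfin.lt_top
  have hae : ∀ D, MeasurableSet D → AEMeasurable (fun ω => ν ω D) P := fun D hD =>
    aemeasurable_apply_of_isCompact ν hν (fun K hK => by
      filter_upwards [ae_lt_top' (hν K hK) (hlt K hK).ne] with ω hω using hω.ne) hD
  let ζ : Measure (Fin N → ℝ) := Measure.ofMeasurable (fun D _ => ∫⁻ ω, ν ω D ∂P) (by simp) (by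
    intro f hf hd
    rw [← lintegral_tsum fun i => hae _ (hf i)]
    exact lintegral_congr fun ω => measure_iUnion hd hf)
  have hζ : ∀ D, MeasurableSet D → ζ D = ∫⁻ ω, ν ω D ∂P := fun D hD =>
    Measure.ofMeasurable_apply D hD
  have : IsFiniteMeasureOnCompacts ζ := ⟨fun K hK => by
    rw [hζ K hK.measurableSet]; exact hlt K hK⟩
  have : ζ.IsAddLeftInvariant := ⟨fun g => by
    refine (measure_ext_of_isCompact _ _ fun K hK => ?_).symm
    rw [Measure.map_apply (measurable_const_add g) hK.measurableSet, hζ _ hK.measurableSet,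
      hζ _ (hpre K hK g).measurableSet, hstat K hK g]⟩
  refine ⟨(Measure.addHaarScalarFactor ζ volume : NNReal), fun D hD => ?_⟩
  rw [← hζ D hD]
  conv_lhs => rw [Measure.isAddLeftInvariant_eq_smul ζ volume]
  rw [Measure.smul_apply, ENNReal.smul_def, smul_eq_mul]

/-- The event that a random continuous map sends some point of a compact set into a closed set
is measurable. -/
theorem exists_measurableSet_hit {Y E J : Type*} [MeasurableSpace Y] [MetricSpace E]
    [ProperSpace E] [PseudoEMetricSpace J] [MeasurableSpace J] [BorelSpace J]
    (Ψ : Y → E → J) (hΨ : ∀ t, Measurable fun y => Ψ y t)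
    {K : Set E} (hK : IsCompact K) {C : Set J} (hC : IsClosed C) :
    ∃ M : Set Y, MeasurableSet M ∧
      ∀ y, Continuous (Ψ y) → (y ∈ M ↔ ∃ t ∈ K, Ψ y t ∈ C) := by
  obtain ⟨Q, hQK, hQc, hKQ⟩ :=
    (TopologicalSpace.IsSeparable.of_separableSpace K).exists_countable_dense_subset
  refine ⟨⋂ m : ℕ, ⋃ q ∈ Q, {y | Metric.infEDist (Ψ y q) C < ((m : ENNReal) + 1)⁻¹}, ?_, ?_⟩
  · refine MeasurableSet.iInter fun m => MeasurableSet.biUnion hQc fun q _ => ?_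
    exact measurableSet_lt (measurable_infEDist.comp (hΨ q)) measurable_const
  · intro y hy
    have hcont : Continuous fun t => Metric.infEDist (Ψ y t) C :=
      Metric.continuous_infEDist.comp hy
    simp only [Set.mem_iInter, Set.mem_iUnion, Set.mem_ofPred_eq, exists_prop]
    constructor
    · intro h
      obtain ⟨q, hq, -⟩ := h 0
      obtain ⟨t, htK, ht⟩ := hK.exists_isMinOn ⟨q, hQK hq⟩ hcont.continuousOn
      refine ⟨t, htK, (Metric.mem_iff_infEDist_zero_of_closed hC).2 ?_⟩
      by_contra hne
      obtain ⟨m, hm⟩ := ENNReal.exists_inv_nat_lt hne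
      obtain ⟨q, hq, hqm⟩ := h m
      have h1 : Metric.infEDist (Ψ y t) C ≤ Metric.infEDist (Ψ y q) C := ht (hQK hq)
      have h2 : ((m : ENNReal) + 1)⁻¹ ≤ (m : ENNReal)⁻¹ := ENNReal.inv_le_inv.2 le_self_add
      exact absurd (h1.trans_lt (hqm.trans_le (h2.trans hm.le))) (lt_irrefl _)
    · rintro ⟨t, htK, ht⟩ m
      have hopen : IsOpen {t | Metric.infEDist (Ψ y t) C < ((m : ENNReal) + 1)⁻¹} :=
        isOpen_lt hcont continuous_const
      have htm : t ∈ {t | Metric.infEDist (Ψ y t) C < ((m : ENNReal) + 1)⁻¹} := by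
        rw [Set.mem_ofPred_eq, (Metric.mem_iff_infEDist_zero_of_closed hC).1 ht]
        simp [ENNReal.add_eq_top]
      obtain ⟨q, hq1, hq2⟩ := mem_closure_iff.1 (hKQ htK) _ hopen htm
      exact ⟨q, hq2, hq1⟩

/-- The number of points of a compact set which a random continuous map sends into a given
countable union of closed sets is measurable. -/
theorem exists_measurable_encard {Y E J : Type*} [MeasurableSpace Y] [MetricSpace E]
    [ProperSpace E] [PseudoEMetricSpace J] [MeasurableSpace J] [BorelSpace J]
    (Ψ : Y → E → J) (hΨ : ∀ t, Measurable fun y => Ψ y t)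
    {K : Set E} (hK : IsCompact K) (C : ℕ → Set J) (hC : ∀ n, IsClosed (C n)) :
    ∃ Φ : Y → ENNReal, Measurable Φ ∧
      ∀ y, Continuous (Ψ y) → Φ y = ({t ∈ K | Ψ y t ∈ ⋃ n, C n}.encard : ENNReal) := by
  classical
  let ι := TopologicalSpace.countableBasis E
  have hι : Countable ι := (TopologicalSpace.countable_countableBasis E).to_subtype
  have hit : ∀ b : ι, ∃ M : Set Y, MeasurableSet M ∧ ∀ y, Continuous (Ψ y) →
      (y ∈ M ↔ ({t ∈ K | Ψ y t ∈ ⋃ n, C n} ∩ closure b.1).Nonempty) := by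
    intro b
    choose M hM hM' using fun n =>
      exists_measurableSet_hit Ψ hΨ (hK.inter_right (isClosed_closure (s := b.1))) (hC n)
    refine ⟨⋃ n, M n, MeasurableSet.iUnion hM, fun y hy => ?_⟩
    simp only [Set.mem_iUnion, hM' _ y hy]
    constructor
    · rintro ⟨n, t, ⟨h1, h2⟩, h3⟩
      exact ⟨t, ⟨h1, n, h3⟩, h2⟩
    · rintro ⟨t, ⟨h1, n, hn⟩, h2⟩
      exact ⟨n, t, ⟨h1, h2⟩, hn⟩
  choose M hM hM' using hit
  let 𝓕 := {F : Finset ι // (F : Set ι).PairwiseDisjoint fun b => closure b.1}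
  refine ⟨fun y => ⨆ F : 𝓕, (⋂ b ∈ F.1, M b).indicator (fun _ => (F.1.card : ENNReal)) y,
    Measurable.iSup fun F => measurable_const.indicator (F.1.measurableSet_biInter fun b _ => hM b),
    fun y hy => ?_⟩
  set T := {t ∈ K | Ψ y t ∈ ⋃ n, C n} with hT
  have hlower : ∀ T' : Finset E, (T' : Set E) ⊆ T → (T'.card : ENNReal) ≤
      ⨆ F : 𝓕, (⋂ b ∈ F.1, M b).indicator (fun _ => (F.1.card : ENNReal)) y := by
    intro T' hT'
    obtain ⟨U, hU, hUd⟩ := T'.finite_toSet.t2_separation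
    have hb : ∀ x, ∃ b : ι, x ∈ b.1 ∧ closure b.1 ⊆ U x := by
      intro x
      obtain ⟨b, hb, h1, h2⟩ := (TopologicalSpace.isBasis_countableBasis E).exists_closure_subset
        ((hU x).2.mem_nhds (hU x).1)
      exact ⟨⟨b, hb⟩, h1, h2⟩
    choose b hb1 hb2 using hb
    have hne : ∀ x ∈ T', ∀ z ∈ T', x ≠ z → Disjoint (closure (b x).1) (closure (b z).1) :=
      fun x hx z hz hxz => (hUd hx hz hxz).mono (hb2 x) (hb2 z)
    have hinj : Set.InjOn b T' := by
      intro x hx z hz hxz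
      by_contra h
      have h1 := Set.disjoint_left.1 (hne x hx z hz h) (subset_closure (hb1 x))
      rw [← hxz] at h1
      exact h1 (subset_closure (hb1 x))
    have hdisj : ((T'.image b : Finset ι) : Set ι).PairwiseDisjoint fun b => closure b.1 := by
      intro p hp q hq hpq
      obtain ⟨x, hx, rfl⟩ := Finset.mem_image.1 hp
      obtain ⟨z, hz, rfl⟩ := Finset.mem_image.1 hq
      exact hne x hx z hz fun h => hpq (by rw [h])
    refine le_trans ?_ (le_iSup _ (⟨T'.image b, hdisj⟩ : 𝓕))
    have hmem : y ∈ ⋂ p ∈ T'.image b, M p := by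
      simp only [Set.mem_iInter]
      intro p hp
      obtain ⟨x, hx, rfl⟩ := Finset.mem_image.1 hp
      exact (hM' _ y hy).2 ⟨x, hT' hx, subset_closure (hb1 x)⟩
    rw [Set.indicator_of_mem hmem, Finset.card_image_of_injOn hinj]
  refine le_antisymm (iSup_le fun F => Set.indicator_apply_le' (fun hmem => ?_) fun _ => zero_le) ?_
  · simp only [Set.mem_iInter] at hmem
    have hne : ∀ p : F.1, (T ∩ closure p.1.1).Nonempty := fun p =>
      (hM' _ y hy).1 (hmem p.1 p.2)
    choose f hfT hfb using hne
    have hinj : Function.Injective f := by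
      intro p q hpq
      by_contra h
      exact Set.disjoint_left.1 (F.2 p.2 q.2 fun h' => h (Subtype.ext h')) (hfb p) (hpq ▸ hfb q)
    have h1 : (F.1.card : ℕ∞) ≤ T.encard := by
      calc (F.1.card : ℕ∞) = (Set.range f).encard := by
            rw [← Set.image_univ, hinj.encard_image]; simp
        _ ≤ T.encard := Set.encard_le_encard (Set.range_subset_iff.2 hfT)
    exact_mod_cast ENat.toENNReal_le.2 h1
  · rcases T.finite_or_infinite with hfin | hinf
    · have := hlower hfin.toFinset (by simp)
      rwa [hfin.encard_eq_coe_toFinset_card, ENat.toENNReal_coe]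
    · have htop : ∀ n : ℕ, (n : ENNReal) ≤
          ⨆ F : 𝓕, (⋂ b ∈ F.1, M b).indicator (fun _ => (F.1.card : ENNReal)) y := by
        intro n
        obtain ⟨t, ht, rfl⟩ := hinf.exists_subset_card_eq n
        exact hlower t ht
      exact le_top.trans (le_of_tendsto' ENNReal.tendsto_nat_nhds_top htop)

theorem le_negIdx_iff {N : ℕ} (Q : (Fin N → ℝ) → ℝ) (k : ℕ) :
    k ≤ negIdx Q ↔ ∃ V : Submodule ℝ (Fin N → ℝ),
      k ≤ Module.finrank ℝ V ∧ ∀ x ∈ V, x ≠ 0 → Q x < 0 := by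
  have hbdd : BddAbove {d : ℕ | ∃ V : Submodule ℝ (Fin N → ℝ),
      Module.finrank ℝ V = d ∧ ∀ x ∈ V, x ≠ 0 → Q x < 0} := by
    refine ⟨N, ?_⟩
    rintro d ⟨V, rfl, -⟩
    simpa using V.finrank_le
  constructor
  · intro hk
    obtain ⟨V, hV, hQ⟩ := Nat.sSup_mem (⟨0, ⊥, by simp, fun x hx hx0 => absurd hx hx0⟩ :
      {d : ℕ | ∃ V : Submodule ℝ (Fin N → ℝ),
        Module.finrank ℝ V = d ∧ ∀ x ∈ V, x ≠ 0 → Q x < 0}.Nonempty) hbdd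
    exact ⟨V, hk.trans hV.ge, hQ⟩
  · rintro ⟨V, hk, hQ⟩
    exact hk.trans (le_csSup hbdd ⟨V, rfl, hQ⟩)

/-- The index is invariant under a linear change of variables. -/
theorem negIdx_comp {N : ℕ} (Q : (Fin N → ℝ) → ℝ) (L : (Fin N → ℝ) ≃ₗ[ℝ] (Fin N → ℝ)) :
    negIdx (fun v => Q (L v)) = negIdx Q := by
  refine eq_of_forall_le_iff fun k => ?_
  rw [le_negIdx_iff, le_negIdx_iff]
  constructor
  · rintro ⟨V, hk, hV⟩
    refine ⟨V.map (L : (Fin N → ℝ) →ₗ[ℝ] (Fin N → ℝ)), by rwa [LinearEquiv.finrank_map_eq], ?_⟩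
    rintro _ ⟨x, hx, rfl⟩ h
    exact hV x hx fun h0 => h (by simp [h0])
  · rintro ⟨V, hk, hV⟩
    refine ⟨V.map (L.symm : (Fin N → ℝ) →ₗ[ℝ] (Fin N → ℝ)),
      by rwa [LinearEquiv.finrank_map_eq], ?_⟩
    rintro _ ⟨x, hx, rfl⟩ h
    simpa using hV x hx fun h0 => h (by simp [h0])

/-- The quadratic form of a square array of coefficients. -/
def quadForm {N : ℕ} (h : Fin N → Fin N → ℝ) (v : Fin N → ℝ) : ℝ :=
  ∑ j, ∑ k, v j * v k * h j k

theorem apply_self_eq_quadForm {N : ℕ} (B : (Fin N → ℝ) →L[ℝ] (Fin N → ℝ) →L[ℝ] ℝ)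
    (v : Fin N → ℝ) :
    B v v = quadForm (fun j k => B (Pi.single j 1) (Pi.single k 1)) v := by
  have hv : v = ∑ j, v j • (Pi.single j 1 : Fin N → ℝ) := pi_eq_sum_univ' v
  calc B v v = B (∑ j, v j • (Pi.single j 1 : Fin N → ℝ))
        (∑ k, v k • (Pi.single k 1 : Fin N → ℝ)) := by rw [← hv]
    _ = quadForm (fun j k => B (Pi.single j 1) (Pi.single k 1)) v := by
      simp only [quadForm, map_sum, map_smul, _root_.sum_apply, _root_.smul_apply, smul_eq_mul,
        Finset.mul_sum]
      rw [Finset.sum_comm]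
      exact Finset.sum_congr rfl fun j _ => Finset.sum_congr rfl fun k _ => by ring

/-- The index of a quadratic form is lower semicontinuous in its coefficients. -/
theorem isOpen_le_negIdx_quadForm {N : ℕ} (k : ℕ) :
    IsOpen {h : Fin N → Fin N → ℝ | k ≤ negIdx (quadForm h)} := by
  have heq : {h : Fin N → Fin N → ℝ | k ≤ negIdx (quadForm h)} =
      ⋃ V : {V : Submodule ℝ (Fin N → ℝ) // k ≤ Module.finrank ℝ V},
        {h | ∀ x ∈ Metric.sphere (0 : Fin N → ℝ) 1 ∩ V.1, quadForm h x < 0} := by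
    ext h
    simp only [Set.mem_ofPred_eq, le_negIdx_iff, Set.mem_iUnion, Subtype.exists, exists_prop]
    refine exists_congr fun V => and_congr_right fun _ => ⟨?_, ?_⟩
    · rintro hV x ⟨hx1, hx2⟩
      refine hV x hx2 fun h0 => ?_
      simp [h0] at hx1
    · intro hV x hx hx0
      have hn : 0 < ‖x‖ := norm_pos_iff.2 hx0
      have h1 := hV (‖x‖⁻¹ • x) ⟨by simp [norm_smul, hn.ne'], V.smul_mem _ hx⟩
      have h2 : quadForm h (‖x‖⁻¹ • x) = (‖x‖⁻¹ * ‖x‖⁻¹) * quadForm h x := by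
        simp only [quadForm, Finset.mul_sum, Pi.smul_apply, smul_eq_mul]
        exact Finset.sum_congr rfl fun j _ => Finset.sum_congr rfl fun k _ => by ring
      rw [h2] at h1
      exact (pos_iff_neg_of_mul_neg h1).1 (by positivity)
  rw [heq]
  refine isOpen_iUnion fun V => isOpen_iff_mem_nhds.2 fun h hh => ?_
  have hKc : IsCompact (Metric.sphere (0 : Fin N → ℝ) 1 ∩ (V.1 : Set (Fin N → ℝ))) :=
    (isCompact_sphere 0 1).inter_right V.1.closed_of_finiteDimensional
  have hcont : Continuous fun p : (Fin N → Fin N → ℝ) × (Fin N → ℝ) => quadForm p.1 p.2 := by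
    unfold quadForm
    fun_prop
  exact hKc.eventually_forall_of_forall_eventually fun x hx =>
    (isOpen_lt hcont continuous_const).mem_nhds (hh x hx)

/-- The set of values, gradients and Hessians of critical points of index `i` with value `≥ u`
is a countable union of closed sets. -/
theorem exists_isClosed_critJet {N : ℕ} (u : ℝ) (i : ℕ) :
    ∃ C : ℕ → Set (ℝ × (Fin N → ℝ) × (Fin N → Fin N → ℝ)), (∀ n, IsClosed (C n)) ∧
      ⋃ n, C n = {p | u ≤ p.1 ∧ p.2.1 = 0 ∧ negIdx (quadForm p.2.2) = i} := by
  obtain ⟨F, hF, -, hFU, -⟩ := (isOpen_le_negIdx_quadForm (N := N) i).exists_iUnion_isClosed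
  have hG : IsClosed {h : Fin N → Fin N → ℝ | negIdx (quadForm h) ≤ i} := by
    have := (isOpen_le_negIdx_quadForm (N := N) (i + 1)).isClosed_compl
    convert this using 1
    ext h
    simp only [Set.mem_ofPred_eq, Set.mem_compl_iff]
    omega
  refine ⟨fun n => {p | u ≤ p.1} ∩ {p | p.2.1 = 0} ∩
    ((fun p => p.2.2) ⁻¹' F n ∩ (fun p => p.2.2) ⁻¹' {h | negIdx (quadForm h) ≤ i}),
    fun n => ?_, ?_⟩
  · exact ((isClosed_le continuous_const continuous_fst).inter
      (isClosed_eq (by fun_prop) continuous_const)).inter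
      (((hF n).preimage (by fun_prop)).inter (hG.preimage (by fun_prop)))
  · rw [← Set.inter_iUnion, ← Set.iUnion_inter, ← Set.preimage_iUnion, hFU]
    ext p
    simp only [Set.mem_inter_iff, Set.mem_ofPred_eq, Set.mem_preimage]
    constructor
    · rintro ⟨⟨h1, h2⟩, h3, h4⟩
      exact ⟨h1, h2, le_antisymm h4 h3⟩
    · rintro ⟨h1, h2, h3⟩
      exact ⟨⟨h1, h2⟩, h3.ge, h3.le⟩

/-- The derivative of a function in the direction `v`, as a limit along a sequence of
difference quotients. -/
noncomputable def seqDirDeriv {E : Type*} [AddCommGroup E] [Module ℝ E] (v : E) (f : E → ℝ)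
    (t : E) : ℝ :=
  Filter.limUnder Filter.atTop fun n : ℕ => (n : ℝ) • (f (t + (n : ℝ)⁻¹ • v) - f t)

theorem measurable_seqDirDeriv {E : Type*} [AddCommGroup E] [Module ℝ E] (v : E) :
    Measurable (seqDirDeriv v) := by
  refine measurable_pi_iff.2 fun t => (StronglyMeasurable.limUnder fun n => ?_).measurable
  have h (s : E) : Measurable fun f : E → ℝ => f s := measurable_pi_apply s
  exact (((h _).sub (h _)).const_smul (n : ℝ)).stronglyMeasurable

theorem seqDirDeriv_eq_fderiv {E : Type*} [NormedAddCommGroup E] [NormedSpace ℝ E] (v : E)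
    {f : E → ℝ} {t : E} (hf : DifferentiableAt ℝ f t) : seqDirDeriv v f t = fderiv ℝ f t v :=
  (hf.hasFDerivAt.lim v (c := fun n : ℕ => (n : ℝ))
    (by simpa using tendsto_natCast_atTop_atTop)).limUnder_eq

/-- The value, gradient and Hessian of a function, in coordinates. -/
noncomputable def jet {N : ℕ} (f : (Fin N → ℝ) → ℝ) (t : Fin N → ℝ) :
    ℝ × (Fin N → ℝ) × (Fin N → Fin N → ℝ) :=
  (f t, fun j => seqDirDeriv (Pi.single j 1) f t,
    fun j k => seqDirDeriv (Pi.single j 1) (seqDirDeriv (Pi.single k 1) f) t)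

theorem measurable_jet {N : ℕ} (t : Fin N → ℝ) :
    Measurable fun f : (Fin N → ℝ) → ℝ => jet f t := by
  refine (measurable_pi_apply t).prodMk (Measurable.prodMk ?_ ?_)
  · exact measurable_pi_iff.2 fun j =>
      (measurable_pi_apply t).comp (measurable_seqDirDeriv (Pi.single j 1))
  · exact measurable_pi_iff.2 fun j => measurable_pi_iff.2 fun k =>
      (measurable_pi_apply t).comp ((measurable_seqDirDeriv (Pi.single j 1)).comp
        (measurable_seqDirDeriv (Pi.single k 1)))

theorem jet_eq {N : ℕ} {f : (Fin N → ℝ) → ℝ} (hf : ContDiff ℝ 2 f) :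
    jet f = fun t => (f t, fun j => fderiv ℝ f t (Pi.single j 1),
      fun j k => fderiv ℝ (fderiv ℝ f) t (Pi.single j 1) (Pi.single k 1)) := by
  have hf' : ContDiff ℝ 1 (fderiv ℝ f) := hf.fderiv_right (by norm_num)
  have h1 : ∀ v, seqDirDeriv v f = fun t => fderiv ℝ f t v := fun v => funext fun t =>
    seqDirDeriv_eq_fderiv v (hf.differentiable (by norm_num) t)
  funext t
  simp only [jet, h1, Prod.mk.injEq, true_and]
  funext j k
  have hd : DifferentiableAt ℝ (fderiv ℝ f) t := hf'.differentiable (by norm_num) t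
  rw [seqDirDeriv_eq_fderiv _ (hd.clm_apply (differentiableAt_const _)),
    fderiv_clm_apply hd (differentiableAt_const _)]
  simp

theorem continuous_jet {N : ℕ} {f : (Fin N → ℝ) → ℝ} (hf : ContDiff ℝ 2 f) :
    Continuous (jet f) := by
  have hf' : ContDiff ℝ 1 (fderiv ℝ f) := hf.fderiv_right (by norm_num)
  have hf'' : Continuous (fderiv ℝ (fderiv ℝ f)) := hf'.continuous_fderiv (by norm_num)
  rw [jet_eq hf]
  have h0 := hf.continuous
  have h1 := hf'.continuous
  fun_prop

theorem mem_critSet_iff_jet {N : ℕ} {f : (Fin N → ℝ) → ℝ} (hf : ContDiff ℝ 2 f)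
    (D : Set (Fin N → ℝ)) (u : ℝ) (i : ℕ) (t : Fin N → ℝ) :
    t ∈ critSet f D u i ↔
      t ∈ D ∧ u ≤ (jet f t).1 ∧ (jet f t).2.1 = 0 ∧ negIdx (quadForm (jet f t).2.2) = i := by
  have hgrad : fderiv ℝ f t = 0 ↔ (fun j => fderiv ℝ f t (Pi.single j 1)) = 0 := by
    refine ⟨fun h => by simp [h]; rfl, fun h => ?_⟩
    ext v
    rw [_root_.zero_apply, pi_eq_sum_univ' v, map_sum]
    refine Finset.sum_eq_zero fun j _ => ?_
    rw [map_smul]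
    have := congrFun h j
    simp_all
  have hhess : (fun v => iteratedFDeriv ℝ 2 f t ![v, v]) =
      quadForm fun j k => fderiv ℝ (fderiv ℝ f) t (Pi.single j 1) (Pi.single k 1) := by
    funext v
    rw [iteratedFDeriv_two_apply]
    exact apply_self_eq_quadForm _ v
  rw [jet_eq hf]
  simp only [critSet, Set.mem_ofPred_eq, hgrad, hhess, ge_iff_le]

/-- On each compact set, the number of critical points is measurable on `C²` functions. -/
theorem exists_measurable_encard_critSet {N : ℕ} {K : Set (Fin N → ℝ)} (hK : IsCompact K)
    (u : ℝ) (i : ℕ) :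
    ∃ Φ : ((Fin N → ℝ) → ℝ) → ENNReal, Measurable Φ ∧
      ∀ f, ContDiff ℝ 2 f → Φ f = ((critSet f K u i).encard : ENNReal) := by
  obtain ⟨C, hC, hCU⟩ := exists_isClosed_critJet (N := N) u i
  obtain ⟨Φ, hΦ, hΦ'⟩ := exists_measurable_encard jet measurable_jet hK C hC
  refine ⟨Φ, hΦ, fun f hf => ?_⟩
  rw [hΦ' f (continuous_jet hf), hCU]
  congr 2
  ext t
  rw [mem_critSet_iff_jet hf]
  rfl

theorem critSet_eq_inter {N : ℕ} (f : (Fin N → ℝ) → ℝ) (D : Set (Fin N → ℝ)) (u : ℝ) (i : ℕ) :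
    critSet f D u i = D ∩ critSet f Set.univ u i := by
  ext t
  simp only [critSet, Set.mem_ofPred_eq, Set.mem_inter_iff, Set.mem_univ, true_and]

theorem critSet_comp_add_right {N : ℕ} (f : (Fin N → ℝ) → ℝ) (D : Set (Fin N → ℝ)) (u : ℝ)
    (i : ℕ) (s : Fin N → ℝ) :
    critSet (fun t => f (t + s)) ((fun t => t + s) ⁻¹' D) u i =
      (fun t => t + s) ⁻¹' critSet f D u i := by
  ext t
  simp only [critSet, Set.mem_ofPred_eq, Set.mem_preimage, fderiv_comp_add_right,
    iteratedFDeriv_comp_add_right]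

theorem critSet_comp_linear {N : ℕ} {f : (Fin N → ℝ) → ℝ} (hf : ContDiff ℝ 2 f)
    (L : (Fin N → ℝ) ≃L[ℝ] (Fin N → ℝ)) (D : Set (Fin N → ℝ)) (u : ℝ) (i : ℕ) :
    L '' critSet (fun t => f (L t)) D u i = critSet f (L '' D) u i := by
  have hmem : ∀ t, t ∈ critSet (fun t => f (L t)) D u i ↔ L t ∈ critSet f (L '' D) u i := by
    intro t
    have h1 : fderiv ℝ (fun t => f (L t)) t = 0 ↔ fderiv ℝ f (L t) = 0 := by
      rw [show (fun t => f (L t)) = f ∘ L from rfl, L.comp_right_fderiv]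
      refine ⟨fun h => ?_, fun h => by rw [h, ContinuousLinearMap.zero_comp]⟩
      ext v
      simpa using DFunLike.congr_fun h (L.symm v)
    have h2 : (fun v => iteratedFDeriv ℝ 2 (fun t => f (L t)) t ![v, v]) =
        fun v => (fun w => iteratedFDeriv ℝ 2 f (L t) ![w, w]) (L.toLinearEquiv v) := by
      funext v
      have := (L : (Fin N → ℝ) →L[ℝ] (Fin N → ℝ)).iteratedFDeriv_comp_right hf t
        (i := 2) le_rfl
      rw [show (fun t => f (L t)) = f ∘ (L : (Fin N → ℝ) →L[ℝ] (Fin N → ℝ)) from rfl, this,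
        ContinuousMultilinearMap.compContinuousLinearMap_apply]
      congr 1
      funext j
      fin_cases j <;> rfl
    simp only [critSet, Set.mem_ofPred_eq, h1]
    rw [h2, negIdx_comp (fun w => iteratedFDeriv ℝ 2 f (L t) ![w, w]), L.injective.mem_set_image]
  ext x
  obtain ⟨t, rfl⟩ := L.surjective x
  rw [L.injective.mem_set_image, hmem]

/-- for a stationary a.s. C² random field `Z` with finite expected number of
critical points, `A` invertible and `X(t) = Z(At)`, one has
`E[μ_i^X(D,u)] = |det A| · E[μ_i^Z(D,u)]` for every measurable bounded `D`. -/
theorem expected_critical_points_anisotropic {N : ℕ}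
    {Ω : Type*} [MeasurableSpace Ω] (P : Measure Ω) [IsProbabilityMeasure P]
    (Z : Ω → (Fin N → ℝ) → ℝ)
    (hmeas : Measurable fun p : Ω × (Fin N → ℝ) => Z p.1 p.2)
    (hstat : ∀ s : Fin N → ℝ,
      Measure.map (fun ω => (fun t => Z ω (t + s))) P = Measure.map (fun ω => Z ω) P)
    (hC2 : ∀ᵐ ω ∂P, ContDiff ℝ 2 (Z ω)) (u : ℝ) (i : ℕ)
    (hfin : ∫⁻ ω, (critSet (Z ω) (Set.Icc 0 1) u i).encard ∂P ≠ ⊤)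
    (A : Matrix (Fin N) (Fin N) ℝ) (hA : IsUnit A.det)
    (X : Ω → (Fin N → ℝ) → ℝ) (hX : ∀ ω t, X ω t = Z ω (A.mulVec t))
    (D : Set (Fin N → ℝ)) (hD : MeasurableSet D) (hDb : Bornology.IsBounded D) :
    ∫⁻ ω, (critSet (X ω) D u i).encard ∂P =
      ENNReal.ofReal |A.det| * ∫⁻ ω, (critSet (Z ω) D u i).encard ∂P := by
  have hZ : Measurable Z := measurable_pi_iff.2 fun t =>
    hmeas.comp (measurable_id.prodMk measurable_const)
  have hZs : ∀ s : Fin N → ℝ, Measurable fun ω t => Z ω (t + s) := fun s =>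
    measurable_pi_iff.2 fun t => hmeas.comp (measurable_id.prodMk measurable_const)
  let ν : Ω → Measure (Fin N → ℝ) := fun ω => pointMeasure (critSet (Z ω) Set.univ u i)
  have hν : ∀ ω D, MeasurableSet D → ν ω D = ((critSet (Z ω) D u i).encard : ENNReal) := by
    intro ω D hD
    rw [critSet_eq_inter]
    exact pointMeasure_apply _ hD
  have hνm : ∀ K, IsCompact K → AEMeasurable (fun ω => ν ω K) P := by
    intro K hK
    obtain ⟨Φ, hΦ, hΦ'⟩ := exists_measurable_encard_critSet hK u i
    refine ⟨fun ω => Φ (Z ω), hΦ.comp hZ, ?_⟩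
    filter_upwards [hC2] with ω hω
    rw [hν ω K hK.measurableSet, hΦ' _ hω]
  have hνs : ∀ K, IsCompact K → ∀ s : Fin N → ℝ,
      ∫⁻ ω, ν ω ((fun t => s + t) ⁻¹' K) ∂P = ∫⁻ ω, ν ω K ∂P := by
    intro K hK s
    obtain ⟨Φ, hΦ, hΦ'⟩ := exists_measurable_encard_critSet hK u i
    calc ∫⁻ ω, ν ω ((fun t => s + t) ⁻¹' K) ∂P
        = ∫⁻ ω, Φ (fun t => Z ω (t + -s)) ∂P := by
          refine lintegral_congr_ae ?_
          filter_upwards [hC2] with ω hω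
          have hpre : K = (fun t => t + -s) ⁻¹' ((fun t => s + t) ⁻¹' K) := by
            ext t
            simp
          have hKs : MeasurableSet ((fun t => s + t) ⁻¹' K) :=
            measurable_const_add s hK.measurableSet
          have hωs : ContDiff ℝ 2 fun t => Z ω (t + -s) :=
            hω.comp (contDiff_id.add contDiff_const)
          rw [hν ω _ hKs, hΦ' _ hωs]
          conv_rhs => rw [hpre, critSet_comp_add_right,
            Set.encard_preimage_of_bijective (AddGroup.addRight_bijective (-s))]
      _ = ∫⁻ ω, Φ (Z ω) ∂P := by
          rw [← lintegral_map hΦ (hZs _), hstat, lintegral_map hΦ hZ]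
      _ = ∫⁻ ω, ν ω K ∂P := by
          refine lintegral_congr_ae ?_
          filter_upwards [hC2] with ω hω
          rw [hν ω K hK.measurableSet, hΦ' _ hω]
  obtain ⟨c, hc⟩ := exists_lintegral_eq_mul_volume ν hνm hνs
    (by simpa only [hν _ _ measurableSet_Icc] using hfin)
  let L : (Fin N → ℝ) ≃L[ℝ] (Fin N → ℝ) := (LinearEquiv.ofIsUnitDet (f := Matrix.toLin' A)
    (v := Pi.basisFun ℝ (Fin N)) (v' := Pi.basisFun ℝ (Fin N))
    (by simpa using hA)).toContinuousLinearEquiv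
  have hL : ∀ t, L t = A.mulVec t := fun t => Matrix.toLin'_apply A t
  have hLD : MeasurableSet (L '' D) := L.toHomeomorph.measurableEmbedding.measurableSet_image.2 hD
  have hvol : volume (L '' D) = ENNReal.ofReal |A.det| * volume D := by
    rw [← LinearMap.det_toLin' A, ← Measure.addHaar_image_linearMap]
    rfl
  calc ∫⁻ ω, (critSet (X ω) D u i).encard ∂P
      = ∫⁻ ω, ν ω (L '' D) ∂P := by
        refine lintegral_congr_ae ?_
        filter_upwards [hC2] with ω hω
        rw [hν ω _ hLD, ← critSet_comp_linear hω, L.injective.encard_image]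
        simp only [hL, ← hX]
    _ = ENNReal.ofReal |A.det| * ∫⁻ ω, ν ω D ∂P := by
        rw [hc _ hLD, hc _ hD, hvol, mul_left_comm]
    _ = ENNReal.ofReal |A.det| * ∫⁻ ω, (critSet (Z ω) D u i).encard ∂P := by
        simp only [hν _ D hD]
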